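/- Let X be the Cayley graph of a finitely generated one-ended group with respect to a finite symmetric generating set, with the identity element 1 as basepoint. If Div_X(20·d(1,x)) ≤ D·d(1,x) for some constant D ≥ 1 and some vertex x, then for every s ≥ 1 there exists a (20D, s, 2s)-bigon at x. -/

import Mathlib

/-!
Put `n = d(1,x)`. If `n ≤ 4s`, every vertex of a geodesic `γ` from `1` to `x` is within `2s` of an
endpoint, so `γ` taken twice is a bigon. Suppose `n > 4s`.

Vertex-transitivity and infiniteness give, at every vertex `v`, two geodesic segments of length
`5n` which together form a geodesic of length `10n` with midpoint `v` (`exists_two_rays`). If points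
on both of them, at distances `t, t' > 2s` from `v`, were `s`-close to a geodesic `γ` starting at
`v`, then the corresponding points of `γ`, at distances within `s` of `t` and `t'` from `v`, would
be at distance at most `|t - t'| + 2s` from one another, forcing `t + t' ≤ |t - t'| + 4s`, that is
`min t t' ≤ 2s`, a contradiction. So one of the two segments is `s`-far from `γ` outside the ball
of radius `2s` about `v` (`exists_escaping_ray`).

Apply this at `1` and at `x` to get segments ending at `a` and `b`. The hypothesis on divergence
gives a path of length at most `D n` from `a` to `b` outside a ball about `1` of radius at least
`2n - 2`; since `γ` lies in the ball of radius `n`, this path is `s`-far from `γ`. The second side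
of the bigon is the concatenation of the first segment, this path, and the reverse of the second
segment. One-endedness enters only through the infiniteness of the group.
-/

open SimpleGraph

/-- A graph has uniformly bounded degree if there is a uniform finite bound on
the cardinality of all neighbour sets. -/
def BddDegree {V : Type*} (G : SimpleGraph V) : Prop :=
  ∃ D : ℕ, ∀ v : V, (G.neighborSet v).encard ≤ D

/-- A walk is geodesic if its length realizes the graph distance between its endpoints. -/
def SimpleGraph.Walk.IsGeodesic {V : Type*} {G : SimpleGraph V} {x y : V}
    (w : G.Walk x y) : Prop :=
  w.length = G.dist x y

/-- A graph is `δ`-hyperbolic if each side of every geodesic triangle is contained in the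
closed `δ`-neighbourhood of the union of the other two sides. -/
def GraphHyperbolic {V : Type*} (G : SimpleGraph V) (δ : ℝ) : Prop :=
  ∀ ⦃a b c : V⦄ (γ₁ : G.Walk a b) (γ₂ : G.Walk b c) (γ₃ : G.Walk c a),
    γ₁.IsGeodesic → γ₂.IsGeodesic → γ₃.IsGeodesic →
      ∀ u ∈ γ₁.support, ∃ v, (v ∈ γ₂.support ∨ v ∈ γ₃.support) ∧ (G.dist u v : ℝ) ≤ δ

/-- `x` admits an `(L,s,C)`-bigon with respect to the basepoint `x₀`: two paths from `x₀`
to `x`, each of length at most `L·d(x₀,x)`, such that any vertex of the first path outside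
the `C`-neighbourhood of `{x₀, x}` is at distance more than `s` from any vertex of the
second path outside that neighbourhood. -/
def IsBigonAt {V : Type*} (G : SimpleGraph V) (x₀ : V) (L s C : ℝ) (x : V) : Prop :=
  ∃ α₁ α₂ : G.Walk x₀ x,
    ((α₁.length : ℝ) ≤ L * G.dist x₀ x) ∧ ((α₂.length : ℝ) ≤ L * G.dist x₀ x) ∧
    ∀ u ∈ α₁.support, ∀ v ∈ α₂.support,
      (C < (G.dist x₀ u : ℝ) ∧ C < (G.dist x u : ℝ)) →
      (C < (G.dist x₀ v : ℝ) ∧ C < (G.dist x v : ℝ)) →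
      s < (G.dist u v : ℝ)

/-- The set `B^X(L,s,C)` of vertices admitting an `(L,s,C)`-bigon. -/
def bigonSet {V : Type*} (G : SimpleGraph V) (x₀ : V) (L s C : ℝ) : Set V :=
  {x | IsBigonAt G x₀ L s C x}

/-- The closed ball of radius `n` about `x` in the graph metric. -/
def gBall {V : Type*} (G : SimpleGraph V) (x : V) (n : ℕ) : Set V :=
  {v | G.dist x v ≤ n}

/-- `X` has exponentially many fat bigons at `x₀`. -/
def HasExpManyFatBigons {V : Type*} (G : SimpleGraph V) (x₀ : V) : Prop :=
  ∃ s₀ c L : ℝ, 0 ≤ s₀ ∧ 1 < c ∧ 1 < L ∧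
    ∀ s : ℝ, s₀ ≤ s → ∃ C : ℝ, 0 ≤ C ∧
      {n : ℕ | (c ^ n : ℝ) ≤ ((bigonSet G x₀ L s C ∩ gBall G x₀ n).ncard : ℝ)}.Infinite

/-- `X` has no fat bigons at `x₀`. -/
def HasNoFatBigons {V : Type*} (G : SimpleGraph V) (x₀ : V) : Prop :=
  ∀ L : ℝ, 1 ≤ L → ∃ s : ℝ, 0 ≤ s ∧ ∀ C : ℝ, 0 ≤ C →
    ∃ R : ℕ, ∀ x ∈ bigonSet G x₀ L s C, G.dist x₀ x ≤ R

/-- A coarse embedding of the graph `G` into the graph `H`, with multiplicative constant `K`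
and compression function `ρ`. -/
def IsCoarseEmbedding {V W : Type*} (G : SimpleGraph V) (H : SimpleGraph W)
    (f : V → W) (K : ℝ) (ρ : ℕ → ℕ) : Prop :=
  1 ≤ K ∧ Filter.Tendsto ρ Filter.atTop Filter.atTop ∧
    ∀ x y : V, (ρ (G.dist x y) : ℝ) ≤ (H.dist (f x) (f y) : ℝ) ∧
      (H.dist (f x) (f y) : ℝ) ≤ K * (G.dist x y : ℝ)

/-- The Cayley graph of a group with respect to a (symmetric) set `S`. -/
def cayleyGraph (G : Type*) [Group G] (S : Set G) : SimpleGraph G :=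
  SimpleGraph.fromRel (fun x y => x⁻¹ * y ∈ S)

/-- The Cayley graph of `G` w.r.t. the basepoint `1` has exponential growth:
`|B_n(1)|^(1/n)` converges to a limit `> 1`. -/
def HasExpGrowth {V : Type*} (G : SimpleGraph V) (x₀ : V) : Prop :=
  ∃ a : ℝ, 1 < a ∧
    Filter.Tendsto (fun n : ℕ => ((gBall G x₀ n).ncard : ℝ) ^ ((n : ℝ)⁻¹))
      Filter.atTop (nhds a)

/-- `Div_X(n) ≤ M`: for all vertices `a b` with `d(a,b) ≤ n` and every `c ∉ {a, b}`, there is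
a path from `a` to `b` of length at most `M` avoiding the ball around `c` of radius
`(1/2)·d(c,{a,b}) − 2`. -/
def DivLE {V : Type*} (G : SimpleGraph V) (n : ℕ) (M : ℝ) : Prop :=
  ∀ a b c : V, G.dist a b ≤ n → c ≠ a → c ≠ b →
    ∃ w : G.Walk a b, (w.length : ℝ) ≤ M ∧
      ∀ u ∈ w.support, ((min (G.dist c a) (G.dist c b) : ℝ)) / 2 - 2 < (G.dist c u : ℝ)

/-- A group (given as a graph) is one-ended. -/
def OneEnded {V : Type*} (G : SimpleGraph V) : Prop :=
  ∃! e, e ∈ G.end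

section GeodesicLemmas

variable {V : Type*} {X : SimpleGraph V}

lemma SimpleGraph.Walk.IsGeodesic.dist_getVert (hX : X.Connected) {u v : V} {p : X.Walk u v}
    (hp : p.IsGeodesic) {i j : ℕ} (hij : i ≤ j) (hj : j ≤ p.length) :
    X.dist (p.getVert i) (p.getVert j) = j - i := by
  have hp' : p.length = X.dist u v := hp
  have h1 := dist_le (p.take i)
  have h2 : X.dist (p.getVert i) (p.getVert j) ≤ ((p.drop i).take (j - i)).length := by
    have h := dist_le ((p.drop i).take (j - i))
    have e : (p.drop i).getVert (j - i) = p.getVert j := by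
      rw [Walk.drop_getVert, Nat.add_sub_cancel' hij]
    rwa [← e]
  have h3 := dist_le (p.drop j)
  simp only [Walk.take_length, Walk.drop_length] at h1 h2 h3
  have h4 := hX.dist_triangle (u := u) (v := p.getVert i) (w := v)
  have h5 := hX.dist_triangle (u := p.getVert i) (v := p.getVert j) (w := v)
  omega

/-- Distances between vertices of a geodesic are differences of distances to its origin. -/
lemma SimpleGraph.Walk.IsGeodesic.dist_le_of_mem (hX : X.Connected) {u v : V} {p : X.Walk u v}
    (hp : p.IsGeodesic) {g g' : V} (hg : g ∈ p.support) (hg' : g' ∈ p.support)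
    (h : X.dist u g ≤ X.dist u g') : X.dist g g' + X.dist u g = X.dist u g' := by
  obtain ⟨i, rfl, hi⟩ := Walk.mem_support_iff_exists_getVert.1 hg
  obtain ⟨j, rfl, hj⟩ := Walk.mem_support_iff_exists_getVert.1 hg'
  have e1 := hp.dist_getVert hX (Nat.zero_le i) hi
  have e2 := hp.dist_getVert hX (Nat.zero_le j) hj
  rw [Walk.getVert_zero] at e1 e2
  have hij : i ≤ j := by omega
  have e3 := hp.dist_getVert hX hij hj
  omega

/-- The vertices of a geodesic lie between its endpoints. -/
lemma SimpleGraph.Walk.IsGeodesic.dist_add_dist (hX : X.Connected) {u v : V} {p : X.Walk u v}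
    (hp : p.IsGeodesic) {g : V} (hg : g ∈ p.support) :
    X.dist u g + X.dist g v = X.dist u v := by
  obtain ⟨i, rfl, hi⟩ := Walk.mem_support_iff_exists_getVert.1 hg
  have e1 := hp.dist_getVert hX (Nat.zero_le i) hi
  have e2 := hp.dist_getVert hX hi le_rfl
  rw [Walk.getVert_zero] at e1
  rw [Walk.getVert_length] at e2
  unfold SimpleGraph.Walk.IsGeodesic at hp
  omega

/-- `p` and `q` issue from `v`, have length `N`, and together form a geodesic of length `2 * N`
with midpoint `v`. -/
def OppositeRays (X : SimpleGraph V) (N : ℕ) {v a b : V} (p : X.Walk v a) (q : X.Walk v b) :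
    Prop :=
  p.length = N ∧ q.length = N ∧ X.dist v a = N ∧ X.dist v b = N ∧
    ∀ u ∈ p.support, ∀ w ∈ q.support, X.dist u w = X.dist v u + X.dist v w

/-- Cutting a long geodesic yields opposite rays at one of its vertices. -/
lemma SimpleGraph.Walk.IsGeodesic.exists_oppositeRays (hX : X.Connected)
    {y z : V} {W : X.Walk y z} (hW : W.IsGeodesic) {N : ℕ} (hN : W.length = 2 * N) :
    ∃ (m : V) (p : X.Walk m y) (q : X.Walk m z), OppositeRays X N p q := by
  have key : ∀ i j, i ≤ j → j ≤ W.length → X.dist (W.getVert i) (W.getVert j) = j - i :=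
    fun i j => hW.dist_getVert hX
  refine ⟨W.getVert N, (W.take N).reverse, W.drop N, ?_, ?_, ?_, ?_, ?_⟩
  · rw [Walk.length_reverse, Walk.take_length]; omega
  · rw [Walk.drop_length]; omega
  · have := key 0 N (by omega) (by omega)
    rw [Walk.getVert_zero, dist_comm] at this
    omega
  · have := key N W.length (by omega) le_rfl
    rw [Walk.getVert_length] at this
    omega
  · intro u hu w hw
    rw [Walk.support_reverse, List.mem_reverse] at hu
    obtain ⟨i, rfl, hi⟩ := Walk.mem_support_iff_exists_getVert.1 hu
    obtain ⟨j, rfl, hj⟩ := Walk.mem_support_iff_exists_getVert.1 hw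
    rw [Walk.take_length] at hi
    rw [Walk.drop_length] at hj
    rw [Walk.take_getVert, Walk.drop_getVert, min_eq_right (by omega : i ≤ N)]
    have e1 := key i (N + j) (by omega) (by omega)
    have e2 := key i N (by omega) (by omega)
    have e3 := key N (N + j) (by omega) (by omega)
    rw [dist_comm] at e2
    omega

/-- At most one of two opposite rays at `v` can come `s`-close to a given geodesic from `v` outside
the ball of radius `2 * s` about `v`. -/
lemma OppositeRays.exists_escaping (hX : X.Connected) {N : ℕ} {v a b z : V} {p : X.Walk v a}
    {q : X.Walk v b} (h : OppositeRays X N p q) {γ : X.Walk v z} (hγ : γ.IsGeodesic) (s : ℝ) :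
    ∃ (c : V) (r : X.Walk v c), r.length = N ∧ X.dist v c = N ∧
      ∀ g ∈ γ.support, ∀ u ∈ r.support, 2 * s < X.dist v u → s < X.dist g u := by
  obtain ⟨hp, hq, ha, hb, hpq⟩ := h
  by_contra! hcon
  obtain ⟨g, hg, u, hu, hu2, hgu⟩ := hcon a p hp ha
  obtain ⟨g', hg', u', hu', hu2', hgu'⟩ := hcon b q hq hb
  have e := hpq u hu u' hu'
  have t1 := hX.dist_triangle (u := u) (v := g) (w := u')
  have t2 := hX.dist_triangle (u := g) (v := g') (w := u')
  have t3 := hX.dist_triangle (u := v) (v := g) (w := u)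
  have t4 := hX.dist_triangle (u := v) (v := u) (w := g)
  have t5 := hX.dist_triangle (u := v) (v := g') (w := u')
  have t6 := hX.dist_triangle (u := v) (v := u') (w := g')
  rw [dist_comm (u := u) (v := g)] at t1 t4
  rw [dist_comm (u := u') (v := g')] at t6
  have hgg : X.dist g g' + X.dist v g = X.dist v g' ∨
      X.dist g g' + X.dist v g' = X.dist v g := by
    rcases le_total (X.dist v g) (X.dist v g') with h | h
    · exact .inl (hγ.dist_le_of_mem hX hg hg' h)
    · right
      rw [dist_comm]
      exact hγ.dist_le_of_mem hX hg' hg h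
  rify at *
  rcases hgg with h | h <;> linarith

lemma SimpleGraph.Walk.IsGeodesic.reverse {u v : V} {p : X.Walk u v} (hp : p.IsGeodesic) :
    p.reverse.IsGeodesic := by
  unfold SimpleGraph.Walk.IsGeodesic at *
  rw [Walk.length_reverse, hp, dist_comm]

end GeodesicLemmas

section CayleyGraphs

variable {G : Type*} [Group G] {S : Set G}

lemma cayleyGraph_adj {a b : G} :
    (cayleyGraph G S).Adj a b ↔ a ≠ b ∧ (a⁻¹ * b ∈ S ∨ b⁻¹ * a ∈ S) :=
  SimpleGraph.fromRel_adj _ _ _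

/-- Left multiplication by `g` as a graph endomorphism of the Cayley graph. -/
def cayleyTranslate (S : Set G) (g : G) : cayleyGraph G S →g cayleyGraph G S where
  toFun a := g * a
  map_rel' := by
    intro a b h
    rw [cayleyGraph_adj] at h ⊢
    simpa [mul_assoc] using h

@[simp] lemma cayleyTranslate_apply (g a : G) : cayleyTranslate S g a = g * a := rfl

lemma cayleyGraph_connected (hSgen : Subgroup.closure S = ⊤) : (cayleyGraph G S).Connected := by
  have hstep : ∀ a s : G, s ∈ S → (cayleyGraph G S).Reachable a (a * s) := by
    intro a s hs
    by_cases h : a = a * s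
    · rw [← h]
    · exact Adj.reachable (cayleyGraph_adj.2 ⟨h, .inl (by simpa using hs)⟩)
  have h1 : ∀ a : G, (cayleyGraph G S).Reachable 1 a := by
    intro a
    have ha : a ∈ Subgroup.closure S := hSgen ▸ Subgroup.mem_top a
    induction ha using Subgroup.closure_induction_right with
    | one => exact Reachable.refl _
    | mul_right x hx y hy ih => exact ih.trans (hstep x y hy)
    | mul_inv_cancel x hx y hy ih =>
      refine ih.trans ?_
      simpa using (hstep (x * y⁻¹) y hy).symm
  exact { preconnected := fun a b => (h1 a).symm.trans (h1 b) }

lemma cayleyGraph_dist_mul (hSgen : Subgroup.closure S = ⊤) (g a b : G) :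
    (cayleyGraph G S).dist (g * a) (g * b) = (cayleyGraph G S).dist a b := by
  have key : ∀ g a b : G, (cayleyGraph G S).dist (g * a) (g * b) ≤ (cayleyGraph G S).dist a b := by
    intro g a b
    obtain ⟨w, hw⟩ := (cayleyGraph_connected hSgen).exists_walk_length_eq_dist a b
    rw [← hw, ← Walk.length_map (cayleyTranslate S g) w]
    exact dist_le _
  refine le_antisymm (key g a b) ?_
  simpa using key g⁻¹ (g * a) (g * b)

lemma gBall_cayleyGraph_finite (hSfin : S.Finite) (hSgen : Subgroup.closure S = ⊤) (n : ℕ) :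
    (gBall (cayleyGraph G S) 1 n).Finite := by
  have hX := cayleyGraph_connected hSgen
  induction n with
  | zero =>
    refine (Set.finite_singleton (1 : G)).subset fun v hv => ?_
    have : (cayleyGraph G S).dist 1 v = 0 := Nat.le_zero.1 hv
    exact (hX.dist_eq_zero_iff.1 this).symm
  | succ n ih =>
    refine (ih.union (ih.mul (hSfin.union hSfin.inv))).subset fun v hv => ?_
    have hv' : (cayleyGraph G S).dist 1 v ≤ n + 1 := hv
    rcases Nat.lt_or_ge n ((cayleyGraph G S).dist 1 v) with h | h
    · right
      obtain ⟨w, hw⟩ := hX.exists_walk_length_eq_dist 1 v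
      have hlen : w.length = n + 1 := by omega
      have hadj := w.adj_getVert_succ (i := n) (by omega)
      rw [← hlen, Walk.getVert_length] at hadj
      have hd := dist_le (w.take n)
      rw [Walk.take_length] at hd
      refine Set.mem_mul.2 ⟨w.getVert n, hd.trans (min_le_left _ _), (w.getVert n)⁻¹ * v, ?_, ?_⟩
      · rcases (cayleyGraph_adj.1 hadj).2 with h | h
        · exact .inl h
        · exact .inr (by simpa using h)
      · simp
    · exact .inl h

/-- The section defining an end picks a component of the complement of any finite vertex set, so a
graph with an end is infinite. -/
lemma OneEnded.infinite {V : Type*} {X : SimpleGraph V} (h : OneEnded X) : Infinite V := by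
  obtain ⟨e, he, -⟩ := h
  by_contra hinf
  rw [not_infinite_iff_finite] at hinf
  have := Fintype.ofFinite V
  have C : X.ComponentCompl ((Finset.univ : Finset V) : Set V) := e (Opposite.op Finset.univ)
  obtain ⟨v, hv, -⟩ := C.nonempty
  simp at hv

/-- Opposite rays exist at every vertex of an infinite Cayley graph: the graph has arbitrarily long
geodesics, and the midpoint of one can be translated to any vertex. -/
lemma exists_two_rays [Infinite G] (hSfin : S.Finite) (hSgen : Subgroup.closure S = ⊤)
    (v : G) (N : ℕ) :
    ∃ (a b : G) (p : (cayleyGraph G S).Walk v a) (q : (cayleyGraph G S).Walk v b),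
      OppositeRays (cayleyGraph G S) N p q := by
  have hX := cayleyGraph_connected hSgen
  obtain ⟨z, hz⟩ := (gBall_cayleyGraph_finite hSfin hSgen (2 * N)).exists_notMem
  have hz' : 2 * N < (cayleyGraph G S).dist 1 z := not_le.1 hz
  obtain ⟨w, hw⟩ := hX.exists_walk_length_eq_dist 1 z
  have hlen : (w.take (2 * N)).length = 2 * N := by rw [Walk.take_length]; omega
  have hgeo : (w.take (2 * N)).IsGeodesic := by
    have := Walk.IsGeodesic.dist_getVert (p := w) hX hw (Nat.zero_le (2 * N)) (by omega)
    rw [Walk.getVert_zero] at this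
    unfold SimpleGraph.Walk.IsGeodesic
    omega
  obtain ⟨m, p, q, hp, hq, ha, hb, hpq⟩ := hgeo.exists_oppositeRays hX hlen
  obtain ⟨g, rfl⟩ : ∃ g, g * m = v := ⟨v * m⁻¹, by simp⟩
  change ∃ (a b : G) (p : (cayleyGraph G S).Walk (cayleyTranslate S g m) a)
    (q : (cayleyGraph G S).Walk (cayleyTranslate S g m) b), OppositeRays (cayleyGraph G S) N p q
  refine ⟨_, _, p.map (cayleyTranslate S g), q.map (cayleyTranslate S g), ?_, ?_, ?_, ?_, ?_⟩
  · rw [Walk.length_map, hp]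
  · rw [Walk.length_map, hq]
  · exact (cayleyGraph_dist_mul hSgen _ _ _).trans ha
  · exact (cayleyGraph_dist_mul hSgen _ _ _).trans hb
  · intro u hu w hw
    rw [Walk.support_map, List.mem_map] at hu hw
    obtain ⟨u, hu, rfl⟩ := hu
    obtain ⟨w, hw, rfl⟩ := hw
    simp only [cayleyTranslate_apply, cayleyGraph_dist_mul hSgen]
    exact hpq u hu w hw

/-- From the origin of any geodesic `γ` of an infinite Cayley graph there is a geodesic of
prescribed length which is `s`-far from `γ` outside the ball of radius `2 * s`. -/
lemma exists_escaping_ray [Infinite G] (hSfin : S.Finite) (hSgen : Subgroup.closure S = ⊤)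
    {v z : G} {γ : (cayleyGraph G S).Walk v z} (hγ : γ.IsGeodesic) (s : ℝ) (N : ℕ) :
    ∃ (c : G) (r : (cayleyGraph G S).Walk v c), r.length = N ∧ (cayleyGraph G S).dist v c = N ∧
      ∀ g ∈ γ.support, ∀ u ∈ r.support, 2 * s < (cayleyGraph G S).dist v u →
        s < (cayleyGraph G S).dist g u := by
  obtain ⟨a, b, p, q, h⟩ := exists_two_rays hSfin hSgen v N
  exact h.exists_escaping (cayleyGraph_connected hSgen) hγ s

end CayleyGraphs

/-- (Proposition 3.4.) In the Cayley graph `X` of a finitely generated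
one-ended group, if `Div_X(20·d(1,x)) ≤ D·d(1,x)` for some `D ≥ 1` and some vertex `x`, then
for every `s ≥ 1` there is a `(20D, s, 2s)`-bigon at `x` (w.r.t. basepoint `1`). -/
theorem bigon_from_divergence_bound
    {G : Type*} [Group G] (S : Set G)
    (hSfin : S.Finite) (hSsymm : S⁻¹ = S) (hSgen : Subgroup.closure S = ⊤)
    (hends : OneEnded (cayleyGraph G S))
    (D : ℝ) (hD : 1 ≤ D) (x : G)
    (hdiv : DivLE (cayleyGraph G S) (20 * (cayleyGraph G S).dist 1 x)
      (D * ((cayleyGraph G S).dist 1 x : ℝ))) :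
    ∀ s : ℝ, 1 ≤ s → IsBigonAt (cayleyGraph G S) 1 (20 * D) s (2 * s) x := by
  intro s hs
  have hX := cayleyGraph_connected hSgen
  have : Infinite G := hends.infinite
  set X := cayleyGraph G S
  obtain ⟨γ, hγ⟩ := hX.exists_walk_length_eq_dist 1 x
  have hγ' : γ.IsGeodesic := hγ
  set n := X.dist 1 x with hn
  have hn0 : (0 : ℝ) ≤ n := Nat.cast_nonneg n
  have hDn : (n : ℝ) ≤ D * n := le_mul_of_one_le_left hn0 hD
  rcases le_or_gt (n : ℝ) (4 * s) with hns | hns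
  · refine ⟨γ, γ, ?_, ?_, ?_⟩
    · rw [hγ]; linarith
    · rw [hγ]; linarith
    · rintro u hu - - ⟨h1, h2⟩ -
      have h3 := hγ'.dist_add_dist hX hu
      rw [dist_comm (u := u) (v := x)] at h3
      rify at h3
      linarith
  · obtain ⟨a, p, hp, hpa, hpγ⟩ := exists_escaping_ray hSfin hSgen hγ' s (5 * n)
    obtain ⟨b, q, hq, hqb, hqγ⟩ := exists_escaping_ray hSfin hSgen hγ'.reverse s (5 * n)
    change X.dist 1 a = 5 * n at hpa
    change X.dist x b = 5 * n at hqb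
    -- `n > 4 * s ≥ 4`
    have hn4 : 4 < n := by
      have : (4 : ℝ) < n := by linarith
      exact_mod_cast this
    have hb : 4 * n ≤ X.dist 1 b := by
      have := hX.dist_triangle (u := x) (v := 1) (w := b)
      rw [dist_comm (u := x) (v := 1)] at this
      omega
    have hab : X.dist a b ≤ 20 * n := by
      have t1 := hX.dist_triangle (u := a) (v := 1) (w := b)
      have t2 := hX.dist_triangle (u := 1) (v := x) (w := b)
      rw [dist_comm (u := a) (v := 1)] at t1
      omega
    obtain ⟨w, hw, hwd⟩ := hdiv a b 1 hab
      (by rintro rfl; rw [SimpleGraph.dist_self] at hpa; omega)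
      (by rintro rfl; rw [SimpleGraph.dist_self] at hb; omega)
    refine ⟨γ, p.append (w.append q.reverse), ?_, ?_, ?_⟩
    · rw [hγ]; linarith
    · rw [Walk.length_append, Walk.length_append, Walk.length_reverse, hp, hq]
      push_cast
      linarith
    · rintro u hu v hv - ⟨hv1, hvx⟩
      rw [Walk.mem_support_append_iff, Walk.mem_support_append_iff, Walk.support_reverse,
        List.mem_reverse] at hv
      rcases hv with hv | hv | hv
      · exact hpγ u hu v hv hv1
      · have h1 := hwd v hv
        have h2 := hγ'.dist_add_dist hX hu
        have h3 := hX.dist_triangle (u := 1) (v := u) (w := v)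
        -- both ends of `w` are at distance at least `4 * n` from `1`, so `w` stays at distance
        -- more than `2 * n - 2`, while `u` is at distance at most `n`
        have h4 : (4 * n : ℝ) ≤ min (X.dist 1 a : ℝ) (X.dist 1 b) := by
          refine le_min ?_ ?_
          · rw [hpa]; push_cast; linarith
          · exact_mod_cast hb
        have h5 : X.dist 1 u ≤ n := by omega
        rify at h3 h5 hn4
        linarith
      · refine hqγ u ?_ v hv hvx
        rwa [Walk.support_reverse, List.mem_reverse]
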